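/- arXiv:1903.05852 — 2 statements merged into one kernel-verified Lean document; each statement's English description precedes it below -/
import Mathlib

section
/- Let ⊩₁ be a relation from X₁ to S₁ and ⊩₂ a relation from X₂ to S₂, and let r₁, r₂ be relations from X₁ to X₂. For a ∈ S₁ put ext₁ a = {x ∈ X₁ | x ⊩₁ a}, ext₁ U = ⋃_{a∈U} ext₁ a, and a↓b = {c ∈ S₁ | ext₁ c ⊆ ext₁ a ∩ ext₁ b}; similarly ext₂ c = {z ∈ X₂ | z ⊩₂ c} for c ∈ S₂, and for U ⊆ X₂ put ◇₂U = {c ∈ S₂ | ∃ z ∈ U, z ⊩₂ c}. Define the set of rules on X₁: R = {(∅, ext₁ S₁)} ∪ {({x,y}, ext₁(a↓b)) | x ⊩₁ a, y ⊩₁ b} ∪ {({x}, r₂⁻(ext₂ c)) | x ∈ X₁, c ∈ ◇₂(r₁{x})} ∪ {({x}, r₁⁻(ext₂ c)) | x ∈ X₁, c ∈ ◇₂(r₂{x})}, where r⁻(V) = {x ∈ X₁ | ∃ z ∈ V, x r z} and rU denotes the image of U ⊆ X₁ under r. Then a subset D ⊆ X₁ is R-closed if and only if D is convergent and ◇₂(r₁D)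 = ◇₂(r₂D). -/
/-!
`RClosed` splits over the four families of rules. The first two families say exactly that `D` is
convergent. By `diamond_relImage_subset_iff`, the third family says `◇₂(r₁D) ⊆ ◇₂(r₂D)`: both sides
assert that any `c` observed at some `z` with `x r₁ z`, `x ∈ D`, is also observed at some `z'` with
`x' r₂ z'`, `x' ∈ D`. The fourth family is the reverse inclusion.
-/

/-- A subset `α` is closed under a rule `(a, b)`: if `a ⊆ α` then `b ∩ α` is nonempty. -/
def RuleClosed {S : Type*} (p : Set S × Set S) (α : Set S) : Prop :=
  p.1 ⊆ α → (p.2 ∩ α).Nonempty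

/-- `α` is `R`-closed if it is closed under every rule in `R`. -/
def RClosed {S : Type*} (R : Set (Set S × Set S)) (α : Set S) : Prop :=
  ∀ p ∈ R, RuleClosed p α

/-- `ext a = {x | x ⊩ a}`. -/
def ext {X S : Type*} (ip : X → S → Prop) (a : S) : Set X := {x | ip x a}

/-- `ext U = ⋃_{a ∈ U} ext a`. -/
def extU {X S : Type*} (ip : X → S → Prop) (U : Set S) : Set X := {x | ∃ a ∈ U, ip x a}

/-- `ext S = {x | ∃ a, x ⊩ a}` (the extent of the whole of `S`). -/
def extAll {X S : Type*} (ip : X → S → Prop) : Set X := {x | ∃ a, ip x a}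

/-- `a ↓ b = {c | ext c ⊆ ext a ∩ ext b}`. -/
def down {X S : Type*} (ip : X → S → Prop) (a b : S) : Set S :=
  {c | ext ip c ⊆ ext ip a ∩ ext ip b}

/-- `◇ U = {c | ∃ z ∈ U, z ⊩ c}`. -/
def diamond {X S : Type*} (ip : X → S → Prop) (U : Set X) : Set S :=
  {c | ∃ z ∈ U, ip z c}

/-- Image of a subset under a relation: `rU = {z | ∃ x ∈ U, r x z}`. -/
def RelImage {X Y : Type*} (r : X → Y → Prop) (U : Set X) : Set Y :=
  {z | ∃ x ∈ U, r x z}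

/-- Preimage of a subset under a relation: `r⁻V = {x | ∃ z ∈ V, r x z}`. -/
def RelPreimSet {X Y : Type*} (r : X → Y → Prop) (V : Set Y) : Set X :=
  {x | ∃ z ∈ V, r x z}

/-- `D` is a convergent subset of the basic pair `(X₁, ⊩₁, S₁)`. -/
def Convergent {X S : Type*} (ip : X → S → Prop) (D : Set X) : Prop :=
  (D ∩ extAll ip).Nonempty ∧
  ∀ a b : S, (D ∩ ext ip a).Nonempty → (D ∩ ext ip b).Nonempty →
    (D ∩ extU ip (down ip a b)).Nonempty

theorem diamond_relImage_subset_iff {X Y S : Type*} (ip : Y → S → Prop)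
    (r s : X → Y → Prop) (D : Set X) :
    diamond ip (RelImage r D) ⊆ diamond ip (RelImage s D) ↔
      ∀ (x : X) (c : S), c ∈ diamond ip (RelImage r {x}) →
        RuleClosed (({x} : Set X), RelPreimSet s (ext ip c)) D := by
  constructor
  · rintro h x c ⟨z, ⟨_, rfl, hr⟩, hz⟩ hx
    obtain ⟨z', ⟨x', hx', hs⟩, hz'⟩ := h ⟨z, ⟨_, hx rfl, hr⟩, hz⟩
    exact ⟨x', ⟨z', hz', hs⟩, hx'⟩
  · rintro h c ⟨z, ⟨x, hx, hr⟩, hz⟩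
    obtain ⟨x', ⟨z', hz', hs⟩, hx'⟩ :=
      h x c ⟨z, ⟨x, rfl, hr⟩, hz⟩ (Set.singleton_subset_iff.2 hx)
    exact ⟨z', ⟨x', hx', hs⟩, hz'⟩

theorem stmt_15 {X₁ S₁ X₂ S₂ : Type*}
    (ip1 : X₁ → S₁ → Prop) (ip2 : X₂ → S₂ → Prop)
    (r₁ r₂ : X₁ → X₂ → Prop) (D : Set X₁) :
    RClosed
      ({p | p = ((∅ : Set X₁), extAll ip1)} ∪
       {p | ∃ (x y : X₁) (a b : S₁), ip1 x a ∧ ip1 y b ∧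
          p = (({x, y} : Set X₁), extU ip1 (down ip1 a b))} ∪
       {p | ∃ (x : X₁) (c : S₂), c ∈ diamond ip2 (RelImage r₁ {x}) ∧
          p = (({x} : Set X₁), RelPreimSet r₂ (ext ip2 c))} ∪
       {p | ∃ (x : X₁) (c : S₂), c ∈ diamond ip2 (RelImage r₂ {x}) ∧
          p = (({x} : Set X₁), RelPreimSet r₁ (ext ip2 c))}) D ↔
    Convergent ip1 D ∧ diamond ip2 (RelImage r₁ D) = diamond ip2 (RelImage r₂ D) := by
  rw [Set.Subset.antisymm_iff, diamond_relImage_subset_iff, diamond_relImage_subset_iff]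
  constructor
  · intro h
    refine ⟨⟨?_, ?_⟩, ?_, ?_⟩
    · rw [Set.inter_comm]
      exact h _ (Or.inl (Or.inl (Or.inl rfl))) (Set.empty_subset D)
    · rintro a b ⟨x, hx, hxa⟩ ⟨y, hy, hyb⟩
      rw [Set.inter_comm]
      exact h _ (Or.inl (Or.inl (Or.inr ⟨x, y, a, b, hxa, hyb, rfl⟩)))
        (Set.pair_subset hx hy)
    · exact fun x c hc => h _ (Or.inl (Or.inr ⟨x, c, hc, rfl⟩))
    · exact fun x c hc => h _ (Or.inr ⟨x, c, hc, rfl⟩)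
  · rintro ⟨⟨hne, hdown⟩, h₁₂, h₂₁⟩ p
      (((rfl | ⟨x, y, a, b, hxa, hyb, rfl⟩) | ⟨x, c, hc, rfl⟩) | ⟨x, c, hc, rfl⟩)
    · intro _
      rwa [Set.inter_comm]
    · intro hxy
      rw [Set.inter_comm]
      exact hdown a b ⟨x, hxy (Or.inl rfl), hxa⟩ ⟨y, hxy (Or.inr rfl), hyb⟩
    · exact h₁₂ x c hc
    · exact h₂₁ x c hc
end

section
/- Let S be a set and R a set of finitary rules on S (pairs (a,b) with a ∈ Fin(S) finite and b ⊆ S). Define relations r₁, r₂ from Fin(S) to R by A r₁ (a,b) ⟺ a ⊆ A and A r₂ (a,b) ⟺ ∃ y ∈ b, {y} ∪ a ⊆ A. For a subset β ⊆ S, let p_β be the relation from the one-element set {*} to Fin(S) defined by * p_β A ⟺ A ⊆ β. Then β is R-closed if and only if r₁ ∘ p_β = r₂ ∘ p_β, i.e., if and only if for every (a,b) ∈ R: (∃ A ∈ Fin(S), a ⊆ A ∧ A ⊆ β) ↔ (∃ A ∈ Fin(S), ∃ y ∈ b, {y} ∪ a ⊆ A ∧ A ⊆ β). -/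
/-!
For a rule `(a, b)`, the composite of `p_β` with `r₁` says exactly that `a ⊆ β`, and the composite
with `r₂` says that `a ⊆ β` and `b` meets `β`: the finite sets `a` and `{y} ∪ a` are themselves the
smallest possible intermediate points `A`. Equality of the two composites is therefore the
implication `a ⊆ β → (b ∩ β).Nonempty` for every rule, which is closedness.
-/

/-- Composition of relations, applying `r` first and then `s`
(i.e. the paper's `s ∘ r`): `x (s ∘ r) z ↔ ∃ y, r x y ∧ s y z`. -/
def RelComp {X Y Z : Type*} (r : X → Y → Prop) (s : Y → Z → Prop) : X → Z → Prop :=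
  fun x z => ∃ y, r x y ∧ s y z

/-- `β ⊆ S` is closed under a set `R` of finitary rules: for each `(a,b) ∈ R`,
if `a ⊆ β` then `b ∩ β` is nonempty. -/
def RClosedFin {S : Type*} (R : Set (Finset S × Set S)) (β : Set S) : Prop :=
  ∀ p ∈ R, ↑p.1 ⊆ β → (p.2 ∩ β).Nonempty

/-- `A r₁ (a,b) ⟺ a ⊆ A`. -/
def relFst {S : Type*} (R : Set (Finset S × Set S)) :
    Finset S → {p // p ∈ R} → Prop :=
  fun A p => p.1.1 ⊆ A

/-- `A r₂ (a,b) ⟺ ∃ y ∈ b, {y} ∪ a ⊆ A`. -/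
def relSnd {S : Type*} [DecidableEq S] (R : Set (Finset S × Set S)) :
    Finset S → {p // p ∈ R} → Prop :=
  fun A p => ∃ y ∈ p.1.2, insert y p.1.1 ⊆ A

/-- `* p_β A ⟺ A ⊆ β`. -/
def relPt {S : Type*} (β : Set S) : PUnit → Finset S → Prop :=
  fun _ A => ↑A ⊆ β

theorem stmt_16 {S : Type*} [DecidableEq S] (R : Set (Finset S × Set S)) (β : Set S) :
    RClosedFin R β ↔
    RelComp (relPt β) (relFst R) = RelComp (relPt β) (relSnd R) := by
  -- A finite `A ⊆ β` containing `a` exists iff `a ⊆ β` (take `A = a`).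
  have fst_iff : ∀ u (p : {p // p ∈ R}),
      RelComp (relPt β) (relFst R) u p ↔ (p.1.1 : Set S) ⊆ β := fun u p =>
    ⟨fun ⟨_, hA, ha⟩ => (Finset.coe_subset.2 ha).trans hA,
      fun h => ⟨p.1.1, h, Finset.Subset.refl _⟩⟩
  -- Likewise for `{y} ∪ a` with some `y ∈ b` (take `A = {y} ∪ a`).
  have snd_iff : ∀ u (p : {p // p ∈ R}),
      RelComp (relPt β) (relSnd R) u p ↔ (p.1.1 : Set S) ⊆ β ∧ (p.1.2 ∩ β).Nonempty := by
    intro u p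
    constructor
    · rintro ⟨A, hA, y, hy, hyA⟩
      exact ⟨fun x hx => hA (hyA (Finset.mem_insert_of_mem hx)),
        y, hy, hA (hyA (Finset.mem_insert_self _ _))⟩
    · rintro ⟨h, y, hy, hyβ⟩
      refine ⟨insert y p.1.1, ?_, y, hy, Finset.Subset.refl _⟩
      change ((insert y p.1.1 : Finset S) : Set S) ⊆ β
      rw [Finset.coe_insert]
      exact Set.insert_subset hyβ h
  constructor
  · intro h
    funext u p
    exact propext ((fst_iff u p).trans
      ((and_iff_left_of_imp (h p.1 p.2)).symm.trans (snd_iff u p).symm))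
  · intro h p hp ha
    have h1 := (fst_iff PUnit.unit ⟨p, hp⟩).2 ha
    rw [h] at h1
    exact ((snd_iff _ _).1 h1).2
end
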